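/- Let Δ ⊆ ℝ² be an LDP-polygon with gauge function g_Δ, and let t > 1 be a real number. Then the series Σ_{n ∈ ℤ²} t^{−g_Δ(n)} converges, and (t − 1)² · Σ_{n ∈ ℤ²} t^{−g_Δ(n)} = (t − 1)² + b·t + Σ_{n ∈ ℤ², 0 < g_Δ(n) < 1} ( t^{2 − g_Δ(n)} + t^{g_Δ(n)} ), where b := |{n ∈ ℤ² : g_Δ(n) = 1}| is the number of lattice points on the boundary of Δ, and the last (finite) sum runs over the nonzero interior lattice points of Δ. -/

import Mathlib

open MeasureTheory Filter Pointwise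

noncomputable section

/-- The canonical embedding of a lattice point of `ℤ^d` into `ℝ^d`. -/
def coeLat {d : ℕ} (n : Fin d → ℤ) : Fin d → ℝ := fun i => (n i : ℝ)

/-- The set of lattice points lying in a subset `S ⊆ ℝ^d`. -/
def latticePoints {d : ℕ} (S : Set (Fin d → ℝ)) : Set (Fin d → ℤ) :=
  {n | coeLat n ∈ S}

/-- A lattice polytope: the convex hull of finitely many points of `ℤ^d`. -/
def IsLatticePolytope {d : ℕ} (P : Set (Fin d → ℝ)) : Prop :=
  ∃ V : Finset (Fin d → ℤ), P = convexHull ℝ (coeLat '' (V : Set (Fin d → ℤ)))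

/-- The dual (polar) body `P* = {y | ⟨y,x⟩ ≥ -1 ∀ x ∈ P}`. -/
def polarDual {d : ℕ} (P : Set (Fin d → ℝ)) : Set (Fin d → ℝ) :=
  {y | ∀ x ∈ P, -1 ≤ ∑ i, y i * x i}

/-- Dimension of a subset of `ℝ^d`: the dimension of its affine span. -/
def dimSet {d : ℕ} (S : Set (Fin d → ℝ)) : ℕ :=
  Module.finrank ℝ (affineSpan ℝ S).direction

/-- A reflexive polytope: a lattice polytope containing the origin in its interior
whose dual is again a lattice polytope. -/
def IsReflexive {d : ℕ} (P : Set (Fin d → ℝ)) : Prop :=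
  IsLatticePolytope P ∧ (0 : Fin d → ℝ) ∈ interior P ∧ IsLatticePolytope (polarDual P)

/-- A (nonempty, exposed) face of dimension `k` of a polytope `P`. -/
def IsFaceOfDim {d : ℕ} (P : Set (Fin d → ℝ)) (k : ℕ) (θ : Set (Fin d → ℝ)) : Prop :=
  IsExposed ℝ P θ ∧ θ.Nonempty ∧ dimSet θ = k

/-- The dual face `θ* = {y ∈ P* | ⟨y,x⟩ = -1 ∀ x ∈ θ}` of a face `θ` of `P`. -/
def dualFace {d : ℕ} (P θ : Set (Fin d → ℝ)) : Set (Fin d → ℝ) :=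
  {y ∈ polarDual P | ∀ x ∈ θ, ∑ i, y i * x i = -1}

/-- The normalized volume of a `k`-dimensional lattice polytope `θ ⊆ ℝ^d`:
`lim_{m → ∞} k! ⬝ |mθ ∩ ℤ^d| / m^k`. -/
def normVol {d : ℕ} (k : ℕ) (θ : Set (Fin d → ℝ)) : ℝ :=
  limUnder atTop
    (fun m : ℕ => (Nat.factorial k : ℝ) * (latticePoints ((m : ℝ) • θ)).ncard / (m : ℝ) ^ k)

/-- An LDP-polygon: a 2-dimensional lattice polytope in `ℝ²` containing the origin
in its interior, all of whose vertices are primitive lattice vectors. -/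
def IsLDP (Δ : Set (Fin 2 → ℝ)) : Prop :=
  IsLatticePolytope Δ ∧ dimSet Δ = 2 ∧ (0 : Fin 2 → ℝ) ∈ interior Δ ∧
    ∀ x ∈ Set.extremePoints ℝ Δ, ∃ n : Fin 2 → ℤ, coeLat n = x ∧ Int.gcd (n 0) (n 1) = 1

/-- The determinant of two lattice vectors. -/
def dt (v n : Fin 2 → ℤ) : ℤ := v 0 * n 1 - v 1 * n 0

lemma dt_expand (v w n : Fin 2 → ℤ) (i : Fin 2) :
    dt v w * n i = dt n w * v i + dt v n * w i := by
  fin_cases i <;> simp [dt] <;> ring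

lemma eq_of_dt {v w m n : Fin 2 → ℤ} (hD : 0 < dt v w) (h1 : dt v m = dt v n)
    (h2 : dt m w = dt n w) : m = n := by
  funext i
  have e1 := dt_expand v w m i
  have e2 := dt_expand v w n i
  rw [h1, h2, ← e2] at e1
  exact mul_left_cancel₀ hD.ne' e1

lemma prim_mul {v n : Fin 2 → ℤ} (hv : Int.gcd (v 0) (v 1) = 1) (h : dt v n = 0) :
    ∃ k : ℤ, ∀ i, n i = k * v i := by
  have hc : IsCoprime (v 0) (v 1) := Int.isCoprime_iff_gcd_eq_one.2 hv
  obtain ⟨a, b, hab⟩ := hc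
  unfold dt at h
  refine ⟨a * n 0 + b * n 1, fun i => ?_⟩
  fin_cases i
  · simp only [Fin.zero_eta, Fin.isValue]
    linear_combination (-n 0) * hab + (-b) * h
  · simp only [Fin.mk_one, Fin.isValue]
    linear_combination (-n 1) * hab + a * h

/-- The summand on the right-hand side. -/
def hfun (t x : ℝ) : ℝ := if x = 1 then t else t ^ (2 - x) + t ^ x

/-- half-open cone -/
def hcone (v w : Fin 2 → ℤ) : Set (Fin 2 → ℤ) := {n | 0 ≤ dt v n ∧ 0 < dt n w}

/-- open parallelogram -/
def opar (v w : Fin 2 → ℤ) : Set (Fin 2 → ℤ) :=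
  {n | 0 < dt v n ∧ dt v n < dt v w ∧ 0 < dt n w ∧ dt n w < dt v w}

/-- half-open parallelogram -/
def hpar (v w : Fin 2 → ℤ) : Set (Fin 2 → ℤ) :=
  {n | 0 ≤ dt v n ∧ dt v n < dt v w ∧ 0 < dt n w ∧ dt n w ≤ dt v w}

lemma hpar_finite {v w : Fin 2 → ℤ} (hD : 0 < dt v w) : (hpar v w).Finite := by
  have h : ((Set.Icc 0 (dt v w)) ×ˢ (Set.Icc 0 (dt v w))).Finite :=
    (Set.finite_Icc _ _).prod (Set.finite_Icc _ _)
  refine Set.Finite.of_injOn (f := fun n => (dt v n, dt n w)) ?_ ?_ h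
  · rintro n ⟨h1, h2, h3, h4⟩
    exact ⟨⟨h1, h2.le⟩, ⟨h3.le, h4⟩⟩
  · intro m _ n _ hmn
    simp only [Prod.mk.injEq] at hmn
    exact eq_of_dt hD hmn.1 hmn.2

lemma hpar_eq {v w : Fin 2 → ℤ} (hv : Int.gcd (v 0) (v 1) = 1) (hw : Int.gcd (w 0) (w 1) = 1)
    (hD : 0 < dt v w) : hpar v w = insert v (opar v w) := by
  ext n
  constructor
  · rintro ⟨h1, h2, h3, h4⟩
    by_cases h5 : dt v n = 0
    · left
      obtain ⟨k, hk⟩ := prim_mul hv h5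
      have e : dt n w = k * dt v w := by simp only [dt, hk]; ring
      rw [e] at h3 h4
      have : k = 1 := by
        have : 0 < k := pos_of_mul_pos_left h3 hD.le
        nlinarith
      funext i
      rw [hk, this, one_mul]
    · by_cases h6 : dt n w = dt v w
      · left
        have h7 : dt w (n - v) = 0 := by
          simp only [dt, Pi.sub_apply] at h6 ⊢; linarith
        obtain ⟨k, hk⟩ := prim_mul hw h7
        have e : dt v n = k * dt v w := by
          have e0 := hk 0
          have e1 := hk 1
          simp only [Pi.sub_apply] at e0 e1
          simp only [dt]
          linear_combination v 0 * e1 - v 1 * e0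
        have : k = 0 := by
          rw [e] at h1 h2
          have h8 : 0 ≤ k := nonneg_of_mul_nonneg_left h1 hD
          nlinarith
        exfalso; apply h5; rw [e, this, zero_mul]
      · right
        exact ⟨lt_of_le_of_ne h1 (Ne.symm h5), h2, h3, lt_of_le_of_ne h4 h6⟩
  · rintro (rfl | ⟨h1, h2, h3, h4⟩)
    · have : dt n n = 0 := by simp only [dt]; ring
      refine ⟨this.ge, this ▸ hD, hD, le_rfl⟩
    · exact ⟨h1.le, h2, h3, h4.le⟩

lemma hasSum_cone {v w : Fin 2 → ℤ} (hD : 0 < dt v w) (g : (Fin 2 → ℤ) → ℝ)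
    (hg : ∀ n, 0 ≤ dt v n → 0 ≤ dt n w → g n * dt v w = dt n w + dt v n)
    {t : ℝ} (ht : 1 < t) (P : Finset (Fin 2 → ℤ)) (hP : ∀ n, n ∈ P ↔ n ∈ hpar v w) :
    HasSum ((hcone v w).indicator fun n => t ^ (-(g n)))
      ((∑ n ∈ P, t ^ (-(g n))) * ((1 - t⁻¹)⁻¹ * (1 - t⁻¹)⁻¹)) := by
  have t0 : 0 < t := by linarith
  have hgeo : HasSum (fun i : ℕ => (t⁻¹) ^ i) (1 - t⁻¹)⁻¹ :=
    hasSum_geometric_of_lt_one (by positivity) (inv_lt_one_of_one_lt₀ ht)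
  have hgeo2 : HasSum (fun x : ℕ × ℕ => (t⁻¹) ^ x.1 * (t⁻¹) ^ x.2)
      ((1 - t⁻¹)⁻¹ * (1 - t⁻¹)⁻¹) :=
    hgeo.mul hgeo (hgeo.summable.mul_of_nonneg hgeo.summable
      (fun _ => by positivity) (fun _ => by positivity))
  have hPs : HasSum (fun p : P => t ^ (-(g p))) (∑ n ∈ P, t ^ (-(g n))) :=
    P.hasSum (fun n => t ^ (-(g n)))
  have hall := hPs.mul hgeo2 (hPs.summable.mul_of_nonneg hgeo2.summable
      (fun _ => by positivity) (fun _ => by positivity))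
  rw [← hasSum_subtype_iff_indicator]
  have hd1 : ∀ (p : Fin 2 → ℤ) (i j : ℤ), dt v (p + i • v + j • w) = dt v p + j * dt v w := by
    intro p i j; simp [dt]; ring
  have hd2 : ∀ (p : Fin 2 → ℤ) (i j : ℤ), dt (p + i • v + j • w) w = dt p w + i * dt v w := by
    intro p i j; simp [dt]; ring
  let φ : P × (ℕ × ℕ) → hcone v w := fun x =>
    ⟨x.1.1 + (x.2.1 : ℤ) • v + (x.2.2 : ℤ) • w, by
      obtain ⟨h1, h2, h3, h4⟩ := (hP _).1 x.1.2
      refine ⟨?_, ?_⟩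
      · rw [hd1]; positivity
      · rw [hd2]; positivity⟩
  have hφ : Function.Bijective φ := by
    constructor
    · rintro ⟨⟨p, hp⟩, i, j⟩ ⟨⟨q, hq⟩, k, l⟩ h
      have h' := congrArg Subtype.val h
      simp only [φ] at h'
      obtain ⟨h1, h2, h3, h4⟩ := (hP _).1 hp
      obtain ⟨k1, k2, k3, k4⟩ := (hP _).1 hq
      have e1 := congrArg (dt v) h'
      have e2 := congrArg (fun z => dt z w) h'
      simp only [hd1, hd2] at e1 e2
      have hjl : (j : ℤ) = l := by
        rcases lt_trichotomy (j : ℤ) l with h | h | h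
        · nlinarith
        · exact h
        · nlinarith
      have hik : (i : ℤ) = k := by
        rcases lt_trichotomy (i : ℤ) k with h | h | h
        · nlinarith
        · exact h
        · nlinarith
      have hpq : p = q := by
        apply eq_of_dt hD
        · rw [hjl] at e1; linarith
        · rw [hik] at e2; linarith
      simp only [Prod.mk.injEq, Subtype.mk.injEq]
      exact ⟨hpq, by exact_mod_cast hik, by exact_mod_cast hjl⟩
    · rintro ⟨n, h1, h2⟩
      have hj0 : 0 ≤ dt v n / dt v w := Int.ediv_nonneg h1 hD.le
      have hi0 : 0 ≤ (dt n w - 1) / dt v w := Int.ediv_nonneg (by linarith) hD.le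
      set j := dt v n / dt v w with hj
      set i := (dt n w - 1) / dt v w with hi
      have a1 := Int.emod_add_mul_ediv (dt v n) (dt v w)
      have a2 := Int.emod_add_mul_ediv (dt n w - 1) (dt v w)
      have b1 := Int.emod_nonneg (dt v n) hD.ne'
      have b2 := Int.emod_nonneg (dt n w - 1) hD.ne'
      have c1 := Int.emod_lt_of_pos (dt v n) hD
      have c2 := Int.emod_lt_of_pos (dt n w - 1) hD
      rw [← hj] at a1
      rw [← hi] at a2
      have hp : n + (-i) • v + (-j) • w ∈ P := by
        rw [hP]
        refine ⟨?_, ?_, ?_, ?_⟩ <;> simp only [hd1, hd2] <;> linarith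
      refine ⟨⟨⟨_, hp⟩, i.toNat, j.toNat⟩, ?_⟩
      apply Subtype.ext
      simp only [φ, Int.toNat_of_nonneg hi0, Int.toNat_of_nonneg hj0]
      funext s
      simp
      ring
  let e := Equiv.ofBijective φ hφ
  rw [← e.hasSum_iff]
  suffices hfe : (fun x : hcone v w => t ^ (-(g x))) ∘ e =
      fun x : P × (ℕ × ℕ) => t ^ (-(g x.1)) * (t⁻¹ ^ x.2.1 * t⁻¹ ^ x.2.2) by
    have hall' := hall
    rw [← hfe] at hall'
    exact hall'
  funext x
  obtain ⟨⟨p, hp⟩, i, j⟩ := x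
  obtain ⟨h1, h2, h3, h4⟩ := (hP _).1 hp
  have hDr : (0 : ℝ) < dt v w := by exact_mod_cast hD
  have key : g (p + (i : ℤ) • v + (j : ℤ) • w) = g p + i + j := by
    have x1 := hg p h1 h3.le
    have x2 := hg (p + (i : ℤ) • v + (j : ℤ) • w) (by rw [hd1]; positivity) (by rw [hd2]; positivity)
    rw [hd1, hd2] at x2
    push_cast at x2
    apply mul_right_cancel₀ hDr.ne'
    linarith
  change t ^ (-(g (p + (i : ℤ) • v + (j : ℤ) • w))) = t ^ (-(g p)) * (t⁻¹ ^ i * t⁻¹ ^ j)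
  rw [key, show -(g p + i + j) = -(g p) + (-(i : ℝ)) + (-(j : ℝ)) by ring, Real.rpow_add t0,
    Real.rpow_add t0, Real.rpow_neg t0.le (i : ℝ), Real.rpow_neg t0.le (j : ℝ), Real.rpow_natCast, Real.rpow_natCast,
    inv_pow, inv_pow]
  ring

lemma cone_sum {v w : Fin 2 → ℤ} (hv : Int.gcd (v 0) (v 1) = 1) (hw : Int.gcd (w 0) (w 1) = 1)
    (hD : 0 < dt v w) (g : (Fin 2 → ℤ) → ℝ)
    (hg : ∀ n, 0 ≤ dt v n → 0 ≤ dt n w → g n * dt v w = dt n w + dt v n)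
    {t : ℝ} (ht : 1 < t) :
    ∃ S : ℝ, ∃ F : Finset (Fin 2 → ℤ), HasSum ((hcone v w).indicator fun n => t ^ (-(g n))) S ∧
      (∀ n, n ∈ F ↔ n ∈ hcone v w ∧ g n ≤ 1) ∧
      (t - 1) ^ 2 * S = ∑ n ∈ F, hfun t (g n) := by
  classical
  have t0 : 0 < t := by linarith
  have hDr : (0 : ℝ) < dt v w := by exact_mod_cast hD
  have hof : (opar v w).Finite := (hpar_finite hD).subset (by rw [hpar_eq hv hw hD]; exact Set.subset_insert _ _)
  let O : Finset (Fin 2 → ℤ) := hof.toFinset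
  have hO : ∀ n, n ∈ O ↔ n ∈ opar v w := fun n => hof.mem_toFinset
  have hvv : dt v v = 0 := by simp only [dt]; ring
  have hvO : v ∉ O := by
    rw [hO]; rintro ⟨h, _⟩; rw [hvv] at h; exact lt_irrefl _ h
  have hP : ∀ n, n ∈ insert v O ↔ n ∈ hpar v w := by
    intro n; rw [hpar_eq hv hw hD, Finset.mem_insert, Set.mem_insert_iff, hO]
  have hsum := hasSum_cone hD g hg ht (insert v O) hP
  have hgv : g v = 1 := by
    have := hg v hvv.ge hD.le
    rw [hvv] at this
    push_cast at this
    apply mul_right_cancel₀ hDr.ne'; linarith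
  have hgO : ∀ n ∈ O, g n * dt v w = dt n w + dt v n := by
    intro n hn
    obtain ⟨h1, h2, h3, h4⟩ := (hO n).1 hn
    exact hg n h1.le h3.le
  refine ⟨_, insert v (O.filter fun n => g n ≤ 1), hsum, ?_, ?_⟩
  · intro n
    rw [Finset.mem_insert, Finset.mem_filter]
    constructor
    · rintro (rfl | ⟨h, h'⟩)
      · exact ⟨⟨hvv.ge, hD⟩, hgv.le⟩
      · obtain ⟨h1, h2, h3, h4⟩ := (hO n).1 h
        exact ⟨⟨h1.le, h3⟩, h'⟩
    · rintro ⟨⟨h1, h2⟩, h3⟩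
      have e := hg n h1 h2.le
      have h5 : dt n w + dt v n ≤ dt v w := by
        have : (dt n w + dt v n : ℝ) ≤ dt v w := by rw [← e]; nlinarith
        exact_mod_cast this
      have := (hP n).2 ⟨h1, by linarith, h2, by linarith⟩
      rw [Finset.mem_insert] at this
      rcases this with h | h
      · exact Or.inl h
      · exact Or.inr ⟨h, h3⟩
  · have hvF : v ∉ O.filter fun n => g n ≤ 1 := fun h => hvO (Finset.mem_filter.1 h).1
    rw [Finset.sum_insert hvO, Finset.sum_insert hvF, hgv]
    have hne : t - 1 ≠ 0 := by linarith
    have e1 : (t - 1) ^ 2 * ((t ^ (-(1 : ℝ)) + ∑ n ∈ O, t ^ (-(g n))) * ((1 - t⁻¹)⁻¹ * (1 - t⁻¹)⁻¹))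
        = t + ∑ n ∈ O, t ^ (2 - g n) := by
      have e2 : ∑ n ∈ O, t ^ (2 - g n) = t ^ 2 * ∑ n ∈ O, t ^ (-(g n)) := by
        rw [Finset.mul_sum]
        refine Finset.sum_congr rfl fun n _ => ?_
        rw [sub_eq_add_neg, Real.rpow_add t0]; norm_num
      rw [e2, Real.rpow_neg_one]
      have : (1 - t⁻¹) = (t - 1) / t := by field_simp
      rw [this]
      field_simp
    rw [e1]
    have e3 : hfun t 1 = t := by simp [hfun]
    rw [e3]
    congr 1
    have s1 : ∑ n ∈ O.filter (fun n => ¬ g n ≤ 1), t ^ (2 - g n)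
        = ∑ n ∈ O.filter (fun n => g n < 1), t ^ (g n) := by
      have d1 : ∀ n, dt v (v + w - n) = dt v w - dt v n := by
        intro n; simp [dt]; ring
      have d2 : ∀ n, dt (v + w - n) w = dt v w - dt n w := by
        intro n; simp [dt]; ring
      have hOs : ∀ n ∈ O, v + w - n ∈ O := by
        intro n hn
        obtain ⟨h1, h2, h3, h4⟩ := (hO n).1 hn
        rw [hO]
        refine ⟨?_, ?_, ?_, ?_⟩ <;> simp only [d1, d2] <;> linarith
      have hgs : ∀ n ∈ O, g (v + w - n) = 2 - g n := by
        intro n hn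
        have x1 := hgO n hn
        have x2 := hgO _ (hOs n hn)
        rw [d1, d2] at x2
        push_cast at x2
        apply mul_right_cancel₀ hDr.ne'
        linarith
      refine Finset.sum_bij' (fun n _ => v + w - n) (fun n _ => v + w - n) ?_ ?_ ?_ ?_ ?_
      · intro n hn
        rw [Finset.mem_filter] at hn ⊢
        exact ⟨hOs n hn.1, by rw [hgs n hn.1]; linarith [not_le.1 hn.2]⟩
      · intro n hn
        rw [Finset.mem_filter] at hn ⊢
        exact ⟨hOs n hn.1, by rw [hgs n hn.1]; linarith [hn.2]⟩
      · intro n _; simp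
      · intro n _; simp
      · intro n hn
        rw [Finset.mem_filter] at hn
        rw [hgs n hn.1]
    rw [← Finset.sum_filter_add_sum_filter_not O (fun n => g n ≤ 1), s1]
    have s2 : O.filter (fun n => g n < 1) = (O.filter (fun n => g n ≤ 1)).filter (fun n => ¬ g n = 1) := by
      ext n
      simp only [Finset.mem_filter]
      constructor
      · rintro ⟨h1, h2⟩; exact ⟨⟨h1, h2.le⟩, h2.ne⟩
      · rintro ⟨⟨h1, h2⟩, h3⟩; exact ⟨h1, lt_of_le_of_ne h2 h3⟩
    rw [s2, Finset.sum_filter (fun n => ¬ g n = 1), ← Finset.sum_add_distrib]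
    refine Finset.sum_congr rfl fun n _ => ?_
    by_cases h : g n = 1
    · simp only [h, hfun]; norm_num
    · simp [h, hfun]

lemma exists_vertices {Δ : Set (Fin 2 → ℝ)} (hΔ : IsLDP Δ) :
    ∃ V : Finset (Fin 2 → ℤ), Δ = convexHull ℝ (coeLat '' (V : Set (Fin 2 → ℤ))) ∧
      ∀ v ∈ V, Int.gcd (v 0) (v 1) = 1 ∧ gauge Δ (coeLat v) = 1 := by
  classical
  obtain ⟨⟨V₀, hV₀⟩, -, h0, hext⟩ := hΔ
  have hfin : (coeLat '' (V₀ : Set (Fin 2 → ℤ))).Finite := V₀.finite_toSet.image _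
  have hcomp : IsCompact Δ := by rw [hV₀]; exact hfin.isCompact_convexHull (𝕜 := ℝ)
  have hconv : Convex ℝ Δ := by rw [hV₀]; exact convex_convexHull _ _
  have h0Δ : (0 : Fin 2 → ℝ) ∈ Δ := interior_subset h0
  have hsub : Set.extremePoints ℝ Δ ⊆ coeLat '' (V₀ : Set (Fin 2 → ℤ)) := by
    rw [hV₀]; exact extremePoints_convexHull_subset
  have hKM := closure_convexHull_extremePoints hcomp hconv
  rw [((hfin.subset hsub).isCompact_convexHull (𝕜 := ℝ)).isClosed.closure_eq] at hKM
  have himg : coeLat '' ((V₀.filter fun n => coeLat n ∈ Set.extremePoints ℝ Δ : Finset _) :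
      Set (Fin 2 → ℤ)) = Set.extremePoints ℝ Δ := by
    ext x
    constructor
    · rintro ⟨n, hn, rfl⟩
      exact (Finset.mem_filter.1 (Finset.mem_coe.1 hn)).2
    · intro hx
      obtain ⟨n, hn, rfl⟩ := hsub hx
      exact ⟨n, Finset.mem_coe.2 (Finset.mem_filter.2 ⟨hn, hx⟩), rfl⟩
  refine ⟨V₀.filter fun n => coeLat n ∈ Set.extremePoints ℝ Δ, ?_, ?_⟩
  · rw [himg, hKM]
  · intro v hv
    have hvx := (Finset.mem_filter.1 hv).2
    obtain ⟨n, hn, hg⟩ := hext _ hvx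
    have hnv : n = v := by
      funext i
      have := congrFun hn i
      simp only [coeLat] at this
      exact_mod_cast this
    subst hnv
    refine ⟨hg, le_antisymm (gauge_le_one_of_mem hvx.1) ?_⟩
    by_contra hlt
    push Not at hlt
    obtain ⟨r, hr0, hr1, y, hy, hry⟩ := exists_lt_of_gauge_lt
      (absorbent_nhds_zero (mem_interior_iff_mem_nhds.1 h0)) hlt
    have hseg : coeLat n ∈ openSegment ℝ (0 : Fin 2 → ℝ) y :=
      ⟨1 - r, r, by linarith, hr0, by ring, by rw [smul_zero, zero_add]; exact hry⟩
    have hz := hvx.2 h0Δ hy hseg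
    have hz0 : ∀ i, n i = 0 := by
      intro i
      have := congrFun hz i
      simp only [coeLat, Pi.zero_apply] at this
      exact_mod_cast this.symm
    rw [hz0, hz0] at hg
    simp at hg

/-- real determinant -/
def rdt (x y : Fin 2 → ℝ) : ℝ := x 0 * y 1 - x 1 * y 0

lemma rdt_coe (m n : Fin 2 → ℤ) : rdt (coeLat m) (coeLat n) = dt m n := by
  simp [rdt, dt, coeLat]

/-- linear functionals bounded by one on the vertices are bounded by the gauge -/
lemma le_gauge_of_vertices {Δ : Set (Fin 2 → ℝ)} (h0 : (0 : Fin 2 → ℝ) ∈ interior Δ)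
    {V : Finset (Fin 2 → ℤ)} (hV : Δ = convexHull ℝ (coeLat '' (V : Set (Fin 2 → ℤ))))
    (a b c : ℝ) (h : ∀ u ∈ V, a * u 0 + b * u 1 ≤ c) (x : Fin 2 → ℝ) :
    a * x 0 + b * x 1 ≤ c * gauge Δ x := by
  have hΔ : ∀ y ∈ Δ, a * y 0 + b * y 1 ≤ c := by
    have hc : Convex ℝ {y : Fin 2 → ℝ | a * y 0 + b * y 1 ≤ c} := by
      intro y hy z hz p q hp hq hpq
      simp only [Set.mem_ofPred_eq, Pi.add_apply, Pi.smul_apply, smul_eq_mul] at *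
      have : c = p * c + q * c := by rw [← add_mul, hpq, one_mul]
      rw [this]
      nlinarith [mul_le_mul_of_nonneg_left hy hp, mul_le_mul_of_nonneg_left hz hq]
    rw [hV]
    refine convexHull_min ?_ hc
    rintro _ ⟨u, hu, rfl⟩
    exact h u hu
  have hc0 : 0 ≤ c := by
    have := hΔ 0 (interior_subset h0); simpa using this
  have habs : Absorbent ℝ Δ := absorbent_nhds_zero (mem_interior_iff_mem_nhds.1 h0)
  refine le_of_forall_pos_lt_add fun ε hε => ?_
  obtain ⟨r, hr0, hr1, y, hy, hry⟩ := exists_lt_of_gauge_lt habs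
    (show gauge Δ x < gauge Δ x + ε / (c + 1) by
      have : 0 < ε / (c + 1) := by positivity
      linarith)
  have e : a * x 0 + b * x 1 = r * (a * y 0 + b * y 1) := by
    rw [← hry]; simp; ring
  rw [e]
  have h1 := mul_le_mul_of_nonneg_left (hΔ y hy) hr0.le
  have h2 : r * c ≤ (gauge Δ x + ε / (c + 1)) * c := mul_le_mul_of_nonneg_right hr1.le hc0
  have h3 : ε / (c + 1) * c < ε := by
    rw [div_mul_eq_mul_div, div_lt_iff₀ (by positivity)]; nlinarith
  nlinarith

lemma exists_left {Δ : Set (Fin 2 → ℝ)} (h0 : (0 : Fin 2 → ℝ) ∈ interior Δ)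
    {V : Finset (Fin 2 → ℤ)} (hV : Δ = convexHull ℝ (coeLat '' (V : Set (Fin 2 → ℤ))))
    {n : Fin 2 → ℤ} (hn : n ≠ 0) : ∃ u ∈ V, 0 < dt n u := by
  by_contra hcon
  push Not at hcon
  have := le_gauge_of_vertices h0 hV (-(n 1 : ℝ)) (n 0) 0 (by
    intro u hu
    have h1 : ((dt n u : ℤ) : ℝ) ≤ 0 := by exact_mod_cast hcon u hu
    simp only [dt] at h1
    push_cast at h1
    linarith) ![-(n 1 : ℝ), (n 0 : ℝ)]
  simp at this
  apply hn
  have e0 : (n 0 : ℝ) = 0 := by nlinarith [mul_self_nonneg (n 0 : ℝ), mul_self_nonneg (n 1 : ℝ)]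
  have e1 : (n 1 : ℝ) = 0 := by nlinarith [mul_self_nonneg (n 0 : ℝ), mul_self_nonneg (n 1 : ℝ)]
  funext i
  fin_cases i
  · simpa using e0
  · simpa using e1

lemma dt_antisymm (a b : Fin 2 → ℤ) : dt a b = - dt b a := by simp only [dt]; ring

lemma plucker (a b c d : Fin 2 → ℤ) :
    dt a b * dt c d - dt a c * dt b d + dt a d * dt b c = 0 := by simp only [dt]; ring

lemma normsq_pos {n : Fin 2 → ℤ} (hn : n ≠ 0) : 0 < n 0 * n 0 + n 1 * n 1 := by
  by_contra h
  apply hn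
  funext i
  fin_cases i
  · simp; nlinarith [mul_self_nonneg (n 0), mul_self_nonneg (n 1)]
  · simp; nlinarith [mul_self_nonneg (n 0), mul_self_nonneg (n 1)]

lemma exists_next {V : Finset (Fin 2 → ℤ)} {n : Fin 2 → ℤ} (hn : n ≠ 0)
    (h : ∃ u ∈ V, 0 < dt n u) :
    ∃ w ∈ V, 0 < dt n w ∧ ∀ u ∈ V, 0 < dt n u → dt u w ≤ 0 := by
  classical
  have hne : (V.filter fun u => 0 < dt n u).Nonempty := by
    obtain ⟨u, hu, h'⟩ := h; exact ⟨u, Finset.mem_filter.2 ⟨hu, h'⟩⟩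
  obtain ⟨w, hw, hmax⟩ := Finset.exists_max_image _
    (fun u : Fin 2 → ℤ => ((n 0 * u 0 + n 1 * u 1 : ℤ) : ℚ) / (dt n u : ℤ)) hne
  rw [Finset.mem_filter] at hw
  refine ⟨w, hw.1, hw.2, fun u hu hu' => ?_⟩
  have h1 := hmax u (Finset.mem_filter.2 ⟨hu, hu'⟩)
  rw [div_le_div_iff₀ (by exact_mod_cast hu') (by exact_mod_cast hw.2)] at h1
  have h2 : (n 0 * u 0 + n 1 * u 1) * dt n w ≤ (n 0 * w 0 + n 1 * w 1) * dt n u := by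
    exact_mod_cast h1
  have h3 : (n 0 * n 0 + n 1 * n 1) * dt u w =
      (n 0 * u 0 + n 1 * u 1) * dt n w - (n 0 * w 0 + n 1 * w 1) * dt n u := by
    simp only [dt]; ring
  have h4 := normsq_pos hn
  by_contra h5
  push Not at h5
  nlinarith

lemma exists_prev {V : Finset (Fin 2 → ℤ)} {n : Fin 2 → ℤ} (hn : n ≠ 0)
    (h : ∃ u ∈ V, 0 < dt u n) :
    ∃ v ∈ V, 0 < dt v n ∧ ∀ u ∈ V, 0 < dt u n → dt v u ≤ 0 := by
  classical
  have hne : (V.filter fun u => 0 < dt u n).Nonempty := by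
    obtain ⟨u, hu, h'⟩ := h; exact ⟨u, Finset.mem_filter.2 ⟨hu, h'⟩⟩
  obtain ⟨w, hw, hmax⟩ := Finset.exists_max_image _
    (fun u : Fin 2 → ℤ => ((n 0 * u 0 + n 1 * u 1 : ℤ) : ℚ) / (dt u n : ℤ)) hne
  rw [Finset.mem_filter] at hw
  refine ⟨w, hw.1, hw.2, fun u hu hu' => ?_⟩
  have h1 := hmax u (Finset.mem_filter.2 ⟨hu, hu'⟩)
  rw [div_le_div_iff₀ (by exact_mod_cast hu') (by exact_mod_cast hw.2)] at h1
  have h2 : (n 0 * u 0 + n 1 * u 1) * dt w n ≤ (n 0 * w 0 + n 1 * w 1) * dt u n := by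
    exact_mod_cast h1
  have h3 : (n 0 * n 0 + n 1 * n 1) * dt w u =
      (n 0 * u 0 + n 1 * u 1) * dt w n - (n 0 * w 0 + n 1 * w 1) * dt u n := by
    simp only [dt]; ring
  have h4 := normsq_pos hn
  by_contra h5
  push Not at h5
  nlinarith

/-- consecutive vertices -/
def IsEdge (V : Finset (Fin 2 → ℤ)) (e : (Fin 2 → ℤ) × (Fin 2 → ℤ)) : Prop :=
  e.1 ∈ V ∧ e.2 ∈ V ∧ 0 < dt e.1 e.2 ∧ ∀ u ∈ V, ¬ (0 < dt e.1 u ∧ 0 < dt u e.2)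

lemma exists_edge {V : Finset (Fin 2 → ℤ)}
    (hleft : ∀ n : Fin 2 → ℤ, n ≠ 0 → ∃ u ∈ V, 0 < dt n u)
    {n : Fin 2 → ℤ} (hn : n ≠ 0) : ∃ e, IsEdge V e ∧ n ∈ hcone e.1 e.2 := by
  obtain ⟨w, hwV, hw, hwmin⟩ := exists_next hn (hleft n hn)
  by_cases hray : ∃ v ∈ V, dt v n = 0 ∧ 0 < v 0 * n 0 + v 1 * n 1
  · obtain ⟨v, hvV, hv0, hvn⟩ := hray
    have hN := normsq_pos hn
    have hx : ∀ u, (n 0 * n 0 + n 1 * n 1) * dt v u = (v 0 * n 0 + v 1 * n 1) * dt n u := by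
      intro u
      simp only [dt] at hv0 ⊢
      linear_combination (n 0 * u 0 + n 1 * u 1) * hv0
    refine ⟨(v, w), ⟨hvV, hwV, ?_, ?_⟩, ⟨hv0.ge, hw⟩⟩
    · have := hx w
      simp only
      by_contra hc
      push Not at hc
      nlinarith [mul_pos hvn hw]
    · rintro u hu ⟨h1, h2⟩
      simp only at h1 h2
      have h3 : 0 < dt n u := by
        by_contra hc
        push Not at hc
        nlinarith [hx u, mul_pos hN h1]
      exact absurd h2 (not_lt.2 (hwmin u hu h3))
  · push Not at hray
    obtain ⟨v, hvV, hv, hvmax⟩ := exists_prev (V := V) hn (by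
      obtain ⟨u, hu, hu'⟩ := hleft (-n) (neg_ne_zero.2 hn)
      refine ⟨u, hu, ?_⟩
      simp only [dt, Pi.neg_apply] at hu' ⊢
      linarith)
    have hv_ne : v ≠ 0 := by
      rintro rfl
      simp [dt] at hv
    have hcl : ∀ u ∈ V, 0 < dt v u → 0 < dt n u := by
      intro u hu hvu
      rcases lt_trichotomy (dt n u) 0 with h | h | h
      · rw [dt_antisymm] at h
        exact absurd hvu (not_lt.2 (hvmax u hu (by linarith)))
      · exfalso
        have h' : dt u n = 0 := by rw [dt_antisymm, h, neg_zero]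
        have h1 := hray u hu h'
        have hN := normsq_pos hn
        have : (n 0 * n 0 + n 1 * n 1) * dt v u = (u 0 * n 0 + u 1 * n 1) * dt v n := by
          simp only [dt] at h' ⊢
          linear_combination (-(n 0 * v 0 + n 1 * v 1)) * h'
        nlinarith [mul_pos hN hvu]
      · exact h
    refine ⟨(v, w), ⟨hvV, hwV, ?_, ?_⟩, ⟨hv.le, hw⟩⟩
    · simp only
      by_contra hc
      push Not at hc
      obtain ⟨u, hu, hvu⟩ := hleft v hv_ne
      have hnu := hcl u hu hvu
      have huw := hwmin u hu hnu
      have hp := plucker v n w u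
      have : 0 ≤ dt w u := by rw [dt_antisymm]; linarith
      nlinarith [mul_pos hvu hw, mul_nonneg hv.le this, mul_nonneg (neg_nonneg.2 hc) hnu.le]
    · rintro u hu ⟨h1, h2⟩
      exact absurd h2 (not_lt.2 (hwmin u hu (hcl u hu h1)))

lemma ray_inj {Δ : Set (Fin 2 → ℝ)} {a b x : Fin 2 → ℤ}
    (ha : gauge Δ (coeLat a) = 1) (hb : gauge Δ (coeLat b) = 1)
    (hab : dt a b = 0) (hxa : 0 < dt x a) (hxb : 0 < dt x b) : a = b := by
  have h : ∀ i, dt x b * a i = dt x a * b i := by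
    intro i
    fin_cases i <;> simp [dt] at hab ⊢
    · linear_combination (x 0) * hab
    · linear_combination (x 1) * hab
  have hr : ((dt x b : ℤ) : ℝ) • coeLat a = ((dt x a : ℤ) : ℝ) • coeLat b := by
    funext i
    simp only [coeLat, Pi.smul_apply, smul_eq_mul]
    exact_mod_cast h i
  have hg := congrArg (gauge Δ) hr
  rw [gauge_smul_of_nonneg (by exact_mod_cast hxb.le), gauge_smul_of_nonneg (by exact_mod_cast hxa.le),
    ha, hb] at hg
  simp only [smul_eq_mul, mul_one] at hg
  have hg' : dt x b = dt x a := by exact_mod_cast hg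
  funext i
  have := h i
  rw [hg'] at this
  exact mul_left_cancel₀ hxa.ne' this

lemma edge_unique {Δ : Set (Fin 2 → ℝ)} {V : Finset (Fin 2 → ℤ)}
    (hV1 : ∀ v ∈ V, gauge Δ (coeLat v) = 1) {n : Fin 2 → ℤ}
    {e f : (Fin 2 → ℤ) × (Fin 2 → ℤ)} (he : IsEdge V e) (hf : IsEdge V f)
    (hne : n ∈ hcone e.1 e.2) (hnf : n ∈ hcone f.1 f.2) : e = f := by
  obtain ⟨v, w⟩ := e
  obtain ⟨v', w'⟩ := f
  obtain ⟨hv, hw, hD, hemp⟩ := he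
  obtain ⟨hv', hw', hD', hemp'⟩ := hf
  obtain ⟨h1, h2⟩ := hne
  obtain ⟨h1', h2'⟩ := hnf
  simp only at *
  have key : ∀ {v w v' : Fin 2 → ℤ}, 0 < dt v w → 0 ≤ dt v n → 0 < dt n w → 0 ≤ dt v' n →
      0 < dt v v' → 0 < dt v' w := by
    intro v w v' hD h1 h2 h1' hc
    have hp := plucker v v' n w
    by_contra hcc
    push Not at hcc
    nlinarith [mul_pos hc h2, mul_nonneg hD.le h1', mul_nonneg h1 (neg_nonneg.2 hcc)]
  have hvv : dt v v' = 0 := by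
    rcases lt_trichotomy (dt v v') 0 with h | h | h
    · rw [dt_antisymm] at h
      have h : 0 < dt v' v := by linarith
      exact absurd ⟨h, key hD' h1' h2' h1 h⟩ (hemp' v hv)
    · exact h
    · exact absurd ⟨h, key hD h1 h2 h1' h⟩ (hemp v' hv')
  have hv_eq : v = v' := by
    have hp := plucker v v' n w
    rw [hvv] at hp
    rcases h1.eq_or_lt with h | h
    · have hv'n : dt v' n = 0 := by
        rw [← h] at hp
        have : dt v w * dt v' n = 0 := by linarith
        exact (mul_eq_zero.1 this).resolve_left hD.ne'
      have hp2 := plucker v' w' n w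
      have hp3 : dt v' w' * dt n w = dt n w' * dt v' w := by
        rw [hv'n, dt_antisymm w' n] at hp2; linarith
      have hv'w : 0 < dt v' w := by
        by_contra hc
        push Not at hc
        nlinarith [mul_pos hD' h2, mul_nonneg h2'.le (neg_nonneg.2 hc)]
      refine ray_inj (Δ := Δ) (x := -w) (hV1 v hv) (hV1 v' hv') hvv ?_ ?_
      · simp only [dt, Pi.neg_apply] at hD ⊢; linarith
      · simp only [dt, Pi.neg_apply] at hv'w ⊢; linarith
    · have hv'n : 0 < dt v' n := by
        rcases h1'.eq_or_lt with h' | h'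
        · exfalso
          have hp4 := plucker v' v n w'
          rw [← h', dt_antisymm v' v, hvv] at hp4
          have : dt v' w' * dt v n = 0 := by linarith
          rcases mul_eq_zero.1 this with h5 | h5 <;> linarith
        · exact h'
      refine ray_inj (Δ := Δ) (x := -n) (hV1 v hv) (hV1 v' hv') hvv ?_ ?_
      · simp only [dt, Pi.neg_apply] at h ⊢; linarith
      · simp only [dt, Pi.neg_apply] at hv'n ⊢; linarith
  subst hv_eq
  have hww : dt w w' = 0 := by
    rcases lt_trichotomy (dt w w') 0 with h | h | h
    · rw [dt_antisymm] at h
      exact absurd ⟨hD', by linarith⟩ (hemp w' hw')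
    · exact h
    · exact absurd ⟨hD, h⟩ (hemp' w hw)
  have := ray_inj (Δ := Δ) (hV1 w hw) (hV1 w' hw') hww hD hD'
  rw [this]

lemma gauge_edge {Δ : Set (Fin 2 → ℝ)} (h0 : (0 : Fin 2 → ℝ) ∈ interior Δ)
    {V : Finset (Fin 2 → ℤ)} (hV : Δ = convexHull ℝ (coeLat '' (V : Set (Fin 2 → ℤ))))
    (hV1 : ∀ v ∈ V, gauge Δ (coeLat v) = 1) {v w : Fin 2 → ℤ} (he : IsEdge V (v, w))
    {n : Fin 2 → ℤ} (h1 : 0 ≤ dt v n) (h2 : 0 ≤ dt n w) :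
    gauge Δ (coeLat n) * dt v w = dt n w + dt v n := by
  obtain ⟨hv, hw, hD, hemp⟩ := he
  simp only at *
  have hconv : Convex ℝ Δ := by rw [hV]; exact convex_convexHull _ _
  have habs : Absorbent ℝ Δ := absorbent_nhds_zero (mem_interior_iff_mem_nhds.1 h0)
  have hub : ∀ {a b c : Fin 2 → ℤ} {p q r : ℤ}, 0 ≤ p → 0 ≤ q → 0 ≤ r →
      gauge Δ (coeLat a) = 1 → gauge Δ (coeLat b) = 1 → (∀ i, r * c i = p * a i + q * b i) →
      gauge Δ (coeLat c) * r ≤ p + q := by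
    intro a b c p q r hp hq hr ha hb habc
    have e : (r : ℝ) • coeLat c = (p : ℝ) • coeLat a + (q : ℝ) • coeLat b := by
      funext i
      simp only [coeLat, Pi.smul_apply, Pi.add_apply, smul_eq_mul]
      exact_mod_cast habc i
    have hg := gauge_add_le hconv habs ((p : ℝ) • coeLat a) ((q : ℝ) • coeLat b)
    rw [← e, gauge_smul_of_nonneg (by exact_mod_cast hr), gauge_smul_of_nonneg (by exact_mod_cast hp),
      gauge_smul_of_nonneg (by exact_mod_cast hq), ha, hb] at hg
    simp only [smul_eq_mul, mul_one] at hg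
    linarith
  apply le_antisymm
  · exact hub h2 h1 hD.le (hV1 v hv) (hV1 w hw) (dt_expand v w n)
  · have hl := le_gauge_of_vertices h0 hV ((w 1 : ℝ) - v 1) ((v 0 : ℝ) - w 0) (dt v w) (by
      intro u hu
      have hgoal : dt u w + dt v u ≤ dt v w := by
        by_contra hc
        push Not at hc
        have hx := dt_expand v w u
        have hn := hemp u hu
        by_cases ha : 0 < dt v u
        · have hb : dt u w ≤ 0 := by
            by_contra hb; exact hn ⟨ha, by linarith⟩
          have := hub (a := u) (b := v) (c := w) hD.le (neg_nonneg.2 hb) ha.le (hV1 u hu) (hV1 v hv)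
            (fun i => by linarith [hx i])
          rw [hV1 w hw] at this
          push_cast at this
          have h' : ((dt v w : ℤ) : ℝ) < dt u w + dt v u := by exact_mod_cast hc
          linarith
        · push Not at ha
          have hb : 0 < dt u w := by linarith
          have := hub (a := u) (b := w) (c := v) hD.le (neg_nonneg.2 ha) hb.le (hV1 u hu) (hV1 w hw)
            (fun i => by linarith [hx i])
          rw [hV1 v hv] at this
          push_cast at this
          have h' : ((dt v w : ℤ) : ℝ) < dt u w + dt v u := by exact_mod_cast hc
          linarith
      have hgoal' : ((dt u w + dt v u : ℤ) : ℝ) ≤ (dt v w : ℤ) := by exact_mod_cast hgoal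
      refine le_trans (le_of_eq ?_) hgoal'
      simp only [dt]; push_cast; ring) (coeLat n)
    rw [mul_comm]
    refine le_trans (le_of_eq ?_) hl
    simp only [dt, coeLat]; push_cast; ring

theorem LDP_gauge_series (Δ : Set (Fin 2 → ℝ)) (hΔ : IsLDP Δ) (t : ℝ) (ht : 1 < t) :
    Summable (fun n : Fin 2 → ℤ => t ^ (-(gauge Δ (coeLat n)))) ∧
      (t - 1) ^ 2 * ∑' n : Fin 2 → ℤ, t ^ (-(gauge Δ (coeLat n))) =
        (t - 1) ^ 2 + ({n : Fin 2 → ℤ | gauge Δ (coeLat n) = 1}.ncard : ℝ) * t +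
          ∑ᶠ n ∈ {n : Fin 2 → ℤ | 0 < gauge Δ (coeLat n) ∧ gauge Δ (coeLat n) < 1},
            (t ^ (2 - gauge Δ (coeLat n)) + t ^ (gauge Δ (coeLat n))) := by
  classical
  obtain ⟨V, hV, hVp⟩ := exists_vertices hΔ
  have h0 := hΔ.2.2.1
  have hV1 : ∀ v ∈ V, gauge Δ (coeLat v) = 1 := fun v hv => (hVp v hv).2
  set g : (Fin 2 → ℤ) → ℝ := fun n => gauge Δ (coeLat n) with hgdef
  have hg_edge : ∀ e, IsEdge V e → ∀ n, 0 ≤ dt e.1 n → 0 ≤ dt n e.2 →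
      g n * dt e.1 e.2 = dt n e.2 + dt e.1 n :=
    fun e he n h1 h2 => gauge_edge h0 hV hV1 (v := e.1) (w := e.2) he h1 h2
  let E : Finset ((Fin 2 → ℤ) × (Fin 2 → ℤ)) := (V ×ˢ V).filter (IsEdge V)
  have hE : ∀ e, e ∈ E ↔ IsEdge V e := by
    intro e
    simp only [E, Finset.mem_filter, Finset.mem_product]
    exact ⟨fun h => h.2, fun h => ⟨⟨h.1, h.2.1⟩, h⟩⟩
  have hex : ∀ n : Fin 2 → ℤ, n ≠ 0 → ∃ e ∈ E, n ∈ hcone e.1 e.2 := by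
    intro n hn
    obtain ⟨e, he, h⟩ := exists_edge (fun m hm => exists_left h0 hV hm) hn
    exact ⟨e, (hE e).2 he, h⟩
  have huniq : ∀ n : Fin 2 → ℤ, ∀ e ∈ E, ∀ f ∈ E, n ∈ hcone e.1 e.2 → n ∈ hcone f.1 f.2 → e = f :=
    fun n e he f hf h1 h2 => edge_unique hV1 ((hE e).1 he) ((hE f).1 hf) h1 h2
  have hzero : ∀ e : (Fin 2 → ℤ) × (Fin 2 → ℤ), (0 : Fin 2 → ℤ) ∉ hcone e.1 e.2 := by
    rintro e ⟨_, h⟩; simp [dt] at h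
  have hg0 : g 0 = 0 := by
    have : coeLat (0 : Fin 2 → ℤ) = 0 := by funext i; simp [coeLat]
    simp only [hgdef, this, gauge_zero]
  have hgpos : ∀ n : Fin 2 → ℤ, n ≠ 0 → 0 < g n := by
    intro n hn
    obtain ⟨e, he, h1, h2⟩ := hex n hn
    have := hg_edge e ((hE e).1 he) n h1 h2.le
    have hD : (0 : ℝ) < dt e.1 e.2 := by exact_mod_cast ((hE e).1 he).2.2.1
    have h1' : (0 : ℝ) ≤ dt e.1 n := by exact_mod_cast h1
    have h2' : (0 : ℝ) < dt n e.2 := by exact_mod_cast h2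
    by_contra hc
    push Not at hc
    nlinarith
  have hcs : ∀ e ∈ E, ∃ S : ℝ, ∃ F : Finset (Fin 2 → ℤ),
      HasSum ((hcone e.1 e.2).indicator fun n => t ^ (-(g n))) S ∧
      (∀ n, n ∈ F ↔ n ∈ hcone e.1 e.2 ∧ g n ≤ 1) ∧
      (t - 1) ^ 2 * S = ∑ n ∈ F, hfun t (g n) := by
    intro e he
    have he' := (hE e).1 he
    exact cone_sum (hVp _ he'.1).1 (hVp _ he'.2.1).1 he'.2.2.1 g (hg_edge e he') ht
  choose! S F hS hF hSF using hcs
  have hsum : HasSum (fun n => t ^ (-(g n))) (1 + ∑ e ∈ E, S e) := by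
    have h1 := (hasSum_ite_eq (0 : Fin 2 → ℤ) (1 : ℝ)).add (hasSum_sum hS)
    have hfe : (fun n => t ^ (-(g n))) = fun b => (if b = 0 then (1 : ℝ) else 0) +
        ∑ e ∈ E, (hcone e.1 e.2).indicator (fun n => t ^ (-(g n))) b := by
      funext n
      by_cases hn : n = 0
      · subst hn
        rw [if_pos rfl, hg0, neg_zero, Real.rpow_zero, Finset.sum_eq_zero, add_zero]
        intro e _
        exact Set.indicator_of_notMem (hzero e) _
      · obtain ⟨e, he, hne⟩ := hex n hn
        rw [if_neg hn, zero_add, Finset.sum_eq_single_of_mem e he, Set.indicator_of_mem hne]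
        intro f hf hfe
        exact Set.indicator_of_notMem (fun h => hfe (huniq n f hf e he h hne)) _
    rw [hfe]
    exact h1
  refine ⟨hsum.summable, ?_⟩
  rw [hsum.tsum_eq]
  let A : Finset (Fin 2 → ℤ) := E.biUnion F
  have hA : ∀ n, n ∈ A ↔ n ≠ 0 ∧ g n ≤ 1 := by
    intro n
    rw [Finset.mem_biUnion]
    constructor
    · rintro ⟨e, he, h⟩
      rw [hF e he] at h
      exact ⟨fun hn => hzero e (hn ▸ h.1), h.2⟩
    · rintro ⟨hn, h⟩
      obtain ⟨e, he, hne⟩ := hex n hn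
      exact ⟨e, he, (hF e he n).2 ⟨hne, h⟩⟩
  have hAsum : ∑ n ∈ A, hfun t (g n) = ∑ e ∈ E, ∑ n ∈ F e, hfun t (g n) := by
    apply Finset.sum_biUnion
    intro e he f hf hef
    rw [Function.onFun, Finset.disjoint_left]
    intro n h1 h2
    exact hef (huniq n e he f hf ((hF e he n).1 h1).1 ((hF f hf n).1 h2).1)
  have hL : (t - 1) ^ 2 * (1 + ∑ e ∈ E, S e) = (t - 1) ^ 2 + ∑ n ∈ A, hfun t (g n) := by
    rw [hAsum, mul_add, mul_one, Finset.mul_sum, Finset.sum_congr rfl hSF]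
  rw [hL, ← Finset.sum_filter_add_sum_filter_not A (fun n => g n = 1), add_assoc]
  congr 2
  · have hs : {n : Fin 2 → ℤ | g n = 1} = ((A.filter fun n => g n = 1 : Finset _) : Set (Fin 2 → ℤ)) := by
      ext n
      rw [Finset.mem_coe, Finset.mem_filter, hA]
      constructor
      · intro h
        have h : g n = 1 := h
        refine ⟨⟨?_, h.le⟩, h⟩
        rintro rfl
        rw [hg0] at h
        exact zero_ne_one h
      · intro h; exact h.2
    rw [hs, Set.ncard_coe_finset, ← nsmul_eq_mul, ← Finset.sum_const]
    refine Finset.sum_congr rfl fun n hn => ?_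
    rw [hfun, if_pos (Finset.mem_filter.1 hn).2]
  · have hs : {n : Fin 2 → ℤ | 0 < g n ∧ g n < 1} =
        ((A.filter fun n => ¬ g n = 1 : Finset _) : Set (Fin 2 → ℤ)) := by
      ext n
      rw [Finset.mem_coe, Finset.mem_filter, hA]
      constructor
      · rintro ⟨h1, h2⟩
        refine ⟨⟨?_, h2.le⟩, h2.ne⟩
        rintro rfl
        rw [hg0] at h1
        exact lt_irrefl _ h1
      · rintro ⟨⟨h1, h2⟩, h3⟩
        exact ⟨hgpos n h1, lt_of_le_of_ne h2 h3⟩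
    rw [hs, finsum_mem_coe_finset]
    refine Finset.sum_congr rfl fun n hn => ?_
    rw [hfun, if_neg (Finset.mem_filter.1 hn).2]

end
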